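/- arXiv:2506.07098 — 3 statements merged into one kernel-verified Lean document; each statement's English description precedes it below -/
import Mathlib

section
/- Let K be a field and B a commutative K-algebra that is finite-dimensional as a K-vector space and generated as a K-algebra by elements x₁, ..., x_n. The following are equivalent: (1) the trace form of B over K is nondegenerate; (2) the minimal polynomial over K of each generator x_i is separable; (3) every element of B is a root of some separable polynomial of K[X]. -/
open Polynomial

/-- The trace form is nondegenerate as soon as it is separating on the left. -/
theorem Algebra.traceForm_nondegenerate_iff {R S : Type*} [CommRing R] [CommRing S] [Algebra R S] :
    (Algebra.traceForm R S).Nondegenerate ↔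
      ∀ a : S, (∀ b, Algebra.trace R S (a * b) = 0) → a = 0 := by
  refine ⟨fun h => h.1, fun h => ⟨h, fun a ha => h a fun b => ?_⟩⟩
  rw [mul_comm]
  exact ha b

theorem Algebra.traceForm_nondegenerate_congr {R S T : Type*} [CommRing R] [CommRing S]
    [CommRing T] [Algebra R S] [Algebra R T] (e : S ≃ₐ[R] T) :
    (Algebra.traceForm R S).Nondegenerate ↔ (Algebra.traceForm R T).Nondegenerate := by
  simp only [Algebra.traceForm_nondegenerate_iff, e.surjective.forall, ← map_mul,
    Algebra.trace_eq_of_algEquiv, map_eq_zero_iff e e.injective]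

section Pi

variable {K ι : Type*} {A : ι → Type*} [Finite ι] [Field K] [∀ i, CommRing (A i)]
  [∀ i, Algebra K (A i)] [∀ i, FiniteDimensional K (A i)]

theorem Algebra.trace_pi_single [DecidableEq ι] (i : ι) (a : A i) :
    Algebra.trace K (∀ i, A i) (Pi.single i a) = Algebra.trace K (A i) a := by
  have hl : Algebra.lmul K (∀ i, A i) (Pi.single i a) =
      LinearMap.single K A i ∘ₗ (Algebra.lmul K (A i) a ∘ₗ LinearMap.proj i) := by
    refine LinearMap.ext fun y => ?_
    simp [Pi.single_mul_left]
  have hr : (Algebra.lmul K (A i) a ∘ₗ LinearMap.proj i) ∘ₗ LinearMap.single K A i =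
      Algebra.lmul K (A i) a := by
    ext y
    simp
  rw [Algebra.trace_apply, hl, LinearMap.trace_comp_comm', hr, Algebra.trace_apply]

theorem Algebra.traceForm_pi_nondegenerate_iff :
    (Algebra.traceForm K (∀ i, A i)).Nondegenerate ↔
      ∀ i, (Algebra.traceForm K (A i)).Nondegenerate := by
  classical
  simp only [Algebra.traceForm_nondegenerate_iff]
  constructor
  · intro h i a ha
    refine (Pi.single_eq_zero_iff (i := i)).mp (h _ fun b => ?_)
    rw [← Pi.single_mul_left, Algebra.trace_pi_single]
    exact ha _
  · intro h x hx
    funext i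
    refine h i _ fun b => ?_
    rw [← Algebra.trace_pi_single, Pi.single_mul_right]
    exact hx _

end Pi

section Field

variable {K B : Type*} [Field K] [CommRing B] [Algebra K B]

theorem isReduced_of_traceForm_nondegenerate (h : (Algebra.traceForm K B).Nondegenerate) :
    IsReduced B where
  eq_zero a ha := Algebra.traceForm_nondegenerate_iff.mp h a fun b =>
    (Algebra.isNilpotent_trace_of_isNilpotent
      ((Commute.all a b).isNilpotent_mul_right ha)).eq_zero

/-- A finite family of separable irreducible monic polynomials has a separable common multiple. -/
theorem exists_separable_forall_dvd {ι : Type*} [Finite ι] (p : ι → K[X])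
    (hm : ∀ i, (p i).Monic) (hi : ∀ i, Irreducible (p i)) (hs : ∀ i, (p i).Separable) :
    ∃ f : K[X], f.Separable ∧ ∀ i, p i ∣ f := by
  classical
  have := Fintype.ofFinite ι
  refine ⟨∏ q ∈ Finset.univ.image p, q, separable_prod' ?_ ?_, fun i =>
    Finset.dvd_prod_of_mem (fun q => q) (Finset.mem_image_of_mem p (Finset.mem_univ i))⟩
  · simp only [Finset.mem_image, Finset.mem_univ, true_and, forall_exists_index,
      forall_apply_eq_imp_iff]
    intro i j hij
    refine ((hi i).coprime_iff_not_dvd).mpr fun hd => hij ?_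
    exact eq_of_monic_of_associated (hm i) (hm j) ((hi i).associated_of_dvd (hi j) hd)
  · simpa using hs

theorem formallyUnramified_of_adjoin_eq_top {s : Set B} (hs : Algebra.adjoin K s = ⊤)
    (h : ∀ b ∈ s, (minpoly K b).Separable) : Algebra.FormallyUnramified K B := by
  refine ⟨?_⟩
  have hD : Set.EqOn (KaehlerDifferential.D K B) (0 : Derivation K B _) s := by
    intro b hb
    obtain ⟨u, v, huv⟩ := h b hb
    have hu : aeval b v * aeval b (derivative (minpoly K b)) = 1 := by
      simpa using congrArg (aeval b) huv
    have h0 := (KaehlerDifferential.D K B).map_aeval (minpoly K b) b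
    rw [minpoly.aeval, map_zero] at h0
    rw [← one_smul B (KaehlerDifferential.D K B b), ← hu, mul_smul, ← h0, smul_zero]
    rfl
  have h0 : KaehlerDifferential.D K B = 0 := Derivation.ext_of_adjoin_eq_top s hs hD
  rw [← Submodule.subsingleton_iff B, ← subsingleton_iff_bot_eq_top,
    ← KaehlerDifferential.span_range_derivation, h0]
  symm
  simp

variable [FiniteDimensional K B]

attribute [local instance] IsArtinianRing.fieldOfSubtypeIsMaximal in
/-- A reduced algebra is the product of its residue fields, and the trace form sees
exactly the separability of these. -/
theorem traceForm_nondegenerate_iff_isSeparable_quotient [IsReduced B] :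
    (Algebra.traceForm K B).Nondegenerate ↔
      ∀ m : MaximalSpectrum B, Algebra.IsSeparable K (B ⧸ m.asIdeal) := by
  have : IsArtinianRing B := isArtinian_of_tower K inferInstance
  rw [Algebra.traceForm_nondegenerate_congr ((IsArtinianRing.equivPi B).restrictScalars K),
    Algebra.traceForm_pi_nondegenerate_iff]
  exact forall_congr' fun m => ((traceForm_nondegenerate_tfae K (B ⧸ m.asIdeal)).out 0 2).symm

theorem traceForm_nondegenerate_of_formallyUnramified [Algebra.FormallyUnramified K B] :
    (Algebra.traceForm K B).Nondegenerate := by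
  have := Algebra.FormallyEtale.of_formallyUnramified_of_field K B
  have := Algebra.FormallyUnramified.isReduced_of_field K B
  exact traceForm_nondegenerate_iff_isSeparable_quotient.mpr fun m => inferInstance

attribute [local instance] IsArtinianRing.fieldOfSubtypeIsMaximal in
theorem exists_separable_aeval_eq_zero (h : (Algebra.traceForm K B).Nondegenerate) (b : B) :
    ∃ f : K[X], f.Separable ∧ aeval b f = 0 := by
  have : IsArtinianRing B := isArtinian_of_tower K inferInstance
  have := isReduced_of_traceForm_nondegenerate h
  have hs := traceForm_nondegenerate_iff_isSeparable_quotient.mp h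
  have hb (m : MaximalSpectrum B) : IsIntegral K (Ideal.Quotient.mkₐ K m.asIdeal b) :=
    .of_finite K _
  obtain ⟨f, hf, hdvd⟩ := exists_separable_forall_dvd
    (fun m : MaximalSpectrum B => minpoly K (Ideal.Quotient.mkₐ K m.asIdeal b))
    (fun m => minpoly.monic (hb m)) (fun m => minpoly.irreducible (hb m))
    (fun m => (hs m).isSeparable' _)
  refine ⟨f, hf, (IsArtinianRing.equivPi B).injective (funext fun m => ?_)⟩
  have hm := aeval_eq_zero_of_dvd_aeval_eq_zero (hdvd m) (minpoly.aeval K _)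
  rw [aeval_algHom_apply] at hm
  simpa using hm

end Field

/-- For a finite-dimensional commutative algebra `B` over a field `K`, generated as a
`K`-algebra by `x 0, ..., x (n-1)`, the following are equivalent: the trace form of `B`
over `K` is nondegenerate; the minimal polynomial of each `x i` is separable; every
element of `B` is a root of some separable polynomial of `K[X]`. -/
theorem stmt7 {K B : Type*} [Field K] [CommRing B] [Algebra K B]
    [FiniteDimensional K B] {n : ℕ} (x : Fin n → B)
    (hx : Algebra.adjoin K (Set.range x) = ⊤) :
    ((Algebra.traceForm K B).Nondegenerate ↔ ∀ i, (minpoly K (x i)).Separable) ∧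
    ((Algebra.traceForm K B).Nondegenerate ↔
      ∀ b : B, ∃ f : Polynomial K, f.Separable ∧ Polynomial.aeval b f = 0) := by
  have hsep (h : ∀ i, (minpoly K (x i)).Separable) : (Algebra.traceForm K B).Nondegenerate :=
    have := formallyUnramified_of_adjoin_eq_top hx (Set.forall_mem_range.mpr h)
    traceForm_nondegenerate_of_formallyUnramified
  have hmin (h : ∀ b : B, ∃ f : Polynomial K, f.Separable ∧ Polynomial.aeval b f = 0) (i) :
      (minpoly K (x i)).Separable := by
    obtain ⟨f, hf, hfx⟩ := h (x i)
    exact hf.of_dvd (minpoly.dvd K _ hfx)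
  exact ⟨⟨fun h => hmin (exists_separable_aeval_eq_zero h), hsep⟩,
    exists_separable_aeval_eq_zero, fun h => hsep (hmin h)⟩
end

section
/- Let K be an infinite field and B a commutative K-algebra that is finite-dimensional as a K-vector space with nondegenerate trace form over K. Then B is monogenic: there exists b ∈ B such that B = K[b], and B is K-algebra isomorphic to K[T]/(f) for some separable monic polynomial f ∈ K[T] (namely the minimal polynomial of b). -/
open Polynomial TensorProduct Module

/-- The algebra trace commutes with extension of the base field. -/
theorem Algebra.trace_one_tmul {K B : Type*} (L : Type*) [Field K] [Field L]
    [Algebra K L] [CommRing B] [Algebra K B] [FiniteDimensional K B] (x : B) :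
    Algebra.trace L (L ⊗[K] B) (1 ⊗ₜ x) = algebraMap K L (Algebra.trace K B x) := by
  rw [Algebra.trace_apply, Algebra.trace_apply, ← LinearMap.trace_baseChange]
  congr 1
  ext y
  simp

/-- A finite-dimensional algebra with nondegenerate trace form is reduced. -/
theorem Algebra.isReduced_of_traceForm_nondegenerate {K B : Type*} [Field K] [CommRing B]
    [Algebra K B] [FiniteDimensional K B] (h : (Algebra.traceForm K B).Nondegenerate) :
    IsReduced B := by
  refine ⟨fun x hx => h.1 x fun y => ?_⟩
  rw [Algebra.traceForm_apply]
  exact (Algebra.isNilpotent_trace_of_isNilpotent (R := K)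
    ((Commute.all x y).isNilpotent_mul_right hx)).eq_zero

/-- Nondegeneracy of the trace form is preserved by extension of the base field. -/
theorem Algebra.traceForm_nondegenerate_baseChange {K B : Type*} (L : Type*) [Field K] [Field L]
    [Algebra K L] [CommRing B] [Algebra K B] [FiniteDimensional K B]
    (h : (Algebra.traceForm K B).Nondegenerate) :
    (Algebra.traceForm L (L ⊗[K] B)).Nondegenerate := by
  classical
  let b := Module.finBasis K B
  rw [LinearMap.BilinForm.nondegenerate_iff_det_ne_zero (b.baseChange L)]
  rw [LinearMap.BilinForm.nondegenerate_iff_det_ne_zero b] at h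
  have : LinearMap.BilinForm.toMatrix (b.baseChange L) (Algebra.traceForm L (L ⊗[K] B)) =
      (LinearMap.BilinForm.toMatrix b (Algebra.traceForm K B)).map (algebraMap K L) := by
    ext i j
    simp [LinearMap.BilinForm.toMatrix_apply, Algebra.traceForm_apply, Algebra.trace_one_tmul]
  rw [this, ← RingHom.mapMatrix_apply, ← RingHom.map_det]
  simpa using h

/-- A finite-dimensional reduced algebra over an algebraically closed field has at least as many
points as its dimension. -/
theorem finrank_le_card_algHom_of_isReduced (L A : Type*) [Field L] [IsAlgClosed L]
    [CommRing A] [Algebra L A] [FiniteDimensional L A] [IsReduced A] :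
    finrank L A ≤ Nat.card (A →ₐ[L] L) := by
  have : IsArtinianRing A := IsArtinianRing.of_finite L A
  have hbij (m : MaximalSpectrum A) : Function.Bijective (algebraMap L (A ⧸ m.asIdeal)) :=
    IsAlgClosed.algebraMap_bijective_of_isIntegral
  let e (m : MaximalSpectrum A) : L ≃ₐ[L] (A ⧸ m.asIdeal) :=
    AlgEquiv.ofBijective (Algebra.ofId L _) (hbij m)
  let φ (m : MaximalSpectrum A) : A →ₐ[L] L :=
    (e m).symm.toAlgHom.comp (Ideal.Quotient.mkₐ L m.asIdeal)
  have hφ : Function.Injective φ := by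
    intro m n hmn
    have hker (m : MaximalSpectrum A) (x : A) : φ m x = 0 ↔ x ∈ m.asIdeal := by
      simp [φ, Ideal.Quotient.eq_zero_iff_mem]
    ext x
    rw [← hker, ← hker, hmn]
  have : Fintype (MaximalSpectrum A) := Fintype.ofFinite _
  have : finrank L A = Nat.card (MaximalSpectrum A) := by
    rw [((IsArtinianRing.equivPi A).restrictScalars L).toLinearEquiv.finrank_eq,
      (LinearEquiv.piCongrRight fun m => (e m).symm.toLinearEquiv).finrank_eq]
    simp
  rw [this]
  exact Nat.card_le_card_of_injective φ hφ

/-- Over an infinite field, some element of a finite-dimensional algebra separates all algebra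
homomorphisms into a given field extension. -/
theorem exists_injective_eval_algHom (K B L : Type*) [Field K] [Infinite K] [CommRing B]
    [Algebra K B] [FiniteDimensional K B] [Field L] [Algebra K L] :
    ∃ b : B, Function.Injective fun φ : B →ₐ[K] L => φ b := by
  by_contra! H
  let p (i : {q : (B →ₐ[K] L) × (B →ₐ[K] L) // q.1 ≠ q.2}) : Submodule K B :=
    LinearMap.eqLocus i.1.1.toLinearMap i.1.2.toLinearMap
  obtain ⟨i, hi⟩ := Subspace.exists_eq_top_of_iUnion_eq_univ (p := p) <| by
    refine Set.eq_univ_of_forall fun b => ?_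
    obtain ⟨φ, ψ, hb, hne⟩ := Function.not_injective_iff.mp (H b)
    exact Set.mem_iUnion.mpr ⟨⟨(φ, ψ), hne⟩, hb⟩
  exact i.2 <| AlgHom.ext fun x => (hi ▸ Submodule.mem_top : x ∈ p i)

/-- Primitive element theorem: a finite-dimensional commutative algebra `B` over an
infinite field `K`, with nondegenerate trace form, is monogenic: `B = K[b]` for some
`b`, and `B ≃ K[T]/(f)` with `f` the (monic, separable) minimal polynomial of `b`. -/
theorem stmt8 {K B : Type*} [Field K] [Infinite K] [CommRing B] [Algebra K B]
    [FiniteDimensional K B]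
    (h : (Algebra.traceForm K B).Nondegenerate) :
    ∃ b : B, Algebra.adjoin K ({b} : Set B) = ⊤ ∧ (minpoly K b).Monic ∧
      (minpoly K b).Separable ∧ Nonempty (B ≃ₐ[K] AdjoinRoot (minpoly K b)) := by
  let L := AlgebraicClosure K
  have : IsReduced (L ⊗[K] B) := Algebra.isReduced_of_traceForm_nondegenerate
    (Algebra.traceForm_nondegenerate_baseChange L h)
  have hcard : finrank K B ≤ Nat.card (B →ₐ[K] L) := by
    rw [← finrank_baseChange (R := L), Nat.card_congr (AlgHom.liftEquiv K L B L)]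
    exact finrank_le_card_algHom_of_isReduced L (L ⊗[K] B)
  obtain ⟨b, hb⟩ := exists_injective_eval_algHom K B L
  have hmonic : (minpoly K b).Monic := minpoly.monic (Algebra.IsIntegral.isIntegral b)
  have hroot : Nat.card (B →ₐ[K] L) ≤ Fintype.card ((minpoly K b).rootSet L) := by
    rw [← Nat.card_eq_fintype_card]
    refine Nat.card_le_card_of_injective (fun φ => ⟨φ b, ?_⟩)
      fun φ ψ hφ => hb (congrArg Subtype.val hφ)
    rw [mem_rootSet_of_ne hmonic.ne_zero, aeval_algHom_apply, minpoly.aeval, map_zero]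
  let f : AdjoinRoot (minpoly K b) →ₐ[K] B :=
    AdjoinRoot.liftAlgHom _ (Algebra.ofId K B) b (minpoly.aeval K b)
  have hf (q : K[X]) : f (AdjoinRoot.mk _ q) = aeval b q := AdjoinRoot.liftAlgHom_mk ..
  have hinj : Function.Injective f := by
    refine (injective_iff_map_eq_zero f).mpr fun x hx => ?_
    obtain ⟨q, rfl⟩ := AdjoinRoot.mk_surjective x
    exact AdjoinRoot.mk_eq_zero.mpr (minpoly.dvd K b (hf q ▸ hx))
  have : Module.Finite K (AdjoinRoot (minpoly K b)) := hmonic.finite_adjoinRoot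
  have hfin : finrank K (AdjoinRoot (minpoly K b)) = (minpoly K b).natDegree :=
    finrank_quotient_span_eq_natDegree
  have hle : (minpoly K b).natDegree ≤ finrank K B :=
    hfin ▸ LinearMap.finrank_le_finrank_of_injective (f := f.toLinearMap) hinj
  have hroot_le : Fintype.card ((minpoly K b).rootSet L) ≤ (minpoly K b).natDegree := by
    rw [← Nat.card_eq_fintype_card]
    exact ncard_rootSet_le _ L
  have hsurj : Function.Surjective f :=
    (LinearMap.injective_iff_surjective_of_finrank_eq_finrank (f := f.toLinearMap)
      (by omega)).mp hinj
  refine ⟨b, ?_, hmonic, ?_, ⟨(AlgEquiv.ofBijective f ⟨hinj, hsurj⟩).symm⟩⟩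
  · rw [Algebra.adjoin_singleton_eq_range_aeval, AlgHom.range_eq_top]
    intro y
    obtain ⟨x, rfl⟩ := hsurj y
    obtain ⟨q, rfl⟩ := AdjoinRoot.mk_surjective x
    exact ⟨q, (hf q).symm⟩
  · rw [← card_rootSet_eq_natDegree_iff_of_splits hmonic.ne_zero
      (IsAlgClosed.splits ((minpoly K b).map (algebraMap K L)))]
    omega
end

section
/- Let K be a field and A a nontrivial commutative K-algebra that is finite-dimensional as a K-vector space. Then A is formally unramified over K (i.e. Ω_{A/K} = 0) if and only if the trace form of A over K is nondegenerate, if and only if every element of A is a root of some separable polynomial of K[X]. -/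
open Polynomial

namespace Algebra

section Pi

variable {K ι : Type*} [Field K] [Finite ι] {L : ι → Type*}

theorem trace_pi_single_s16 [DecidableEq ι] [∀ i, CommRing (L i)] [∀ i, Algebra K (L i)]
    [∀ i, FiniteDimensional K (L i)] (i : ι) (y : L i) :
    trace K (∀ i, L i) (Pi.single i y) = trace K (L i) y := by
  have h : lmul K (∀ i, L i) (Pi.single i y) =
      LinearMap.single K L i ∘ₗ (lmul K (L i) y ∘ₗ LinearMap.proj i) := by
    refine LinearMap.ext fun x ↦ funext fun j ↦ ?_
    obtain rfl | hj := eq_or_ne j i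
    · simp
    · simp [hj]
  rw [trace_apply, h, LinearMap.trace_comp_comm', LinearMap.comp_assoc,
    LinearMap.proj_comp_single_same, LinearMap.comp_id, trace_apply]

variable [∀ i, Field (L i)] [∀ i, Algebra K (L i)]
  {A : Type*} [CommRing A] [Algebra K A]

theorem traceForm_nondegenerate_iff_of_algEquiv_pi [∀ i, FiniteDimensional K (L i)]
    (e : A ≃ₐ[K] ∀ i, L i) :
    (traceForm K A).Nondegenerate ↔ ∀ i, Algebra.IsSeparable K (L i) := by
  classical
  have trace_mul (x : A) (i : ι) (y : L i) :
      trace K A (x * e.symm (Pi.single i y)) = trace K (L i) (e x i * y) := by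
    rw [← trace_eq_of_algEquiv e, map_mul, e.apply_symm_apply, ← trace_pi_single_s16 i,
      ← Pi.single_mul_right]
  refine (LinearMap.IsRefl.nondegenerate_iff_separatingLeft (B := traceForm K A)
    (traceForm_isSymm K).isRefl).trans ⟨fun h i ↦ ?_, fun h x hx ↦ ?_⟩
  · by_contra hi
    have h0 : e.symm (Pi.single i 1) = 0 := h _ fun y ↦ by
      rw [traceForm_apply, mul_comm, trace_mul, trace_eq_zero_of_not_isSeparable hi,
        LinearMap.zero_apply]
    rw [EmbeddingLike.map_eq_zero_iff, Pi.single_eq_zero_iff] at h0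
    exact one_ne_zero h0
  · rw [← EmbeddingLike.map_eq_zero_iff (f := e)]
    funext i
    refine (traceForm_nondegenerate K (L i)).1 _ fun y ↦ ?_
    rw [traceForm_apply, ← trace_mul, ← traceForm_apply, hx]

theorem exists_separable_aeval_eq_zero_of_algEquiv_pi [∀ i, Algebra.IsSeparable K (L i)]
    (e : A ≃ₐ[K] ∀ i, L i) (a : A) :
    ∃ f : K[X], f.Separable ∧ aeval a f = 0 := by
  classical
  have := Fintype.ofFinite ι
  have hint (i : ι) : IsIntegral K (e a i) := Algebra.IsSeparable.isIntegral K _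
  let s : Finset K[X] := Finset.univ.image fun i ↦ minpoly K (e a i)
  refine ⟨∏ p ∈ s, p, separable_prod' ?_ ?_, ?_⟩
  · simp only [s, Finset.mem_image, Finset.mem_univ, true_and, forall_exists_index,
      forall_apply_eq_imp_iff]
    intro i j hij
    refine ((minpoly.irreducible (hint i)).coprime_iff_not_dvd).2 fun hdvd ↦ hij ?_
    exact eq_of_monic_of_associated (minpoly.monic (hint i)) (minpoly.monic (hint j))
      ((minpoly.irreducible (hint i)).associated_of_dvd (minpoly.irreducible (hint j)) hdvd)
  · simp only [s, Finset.mem_image, Finset.mem_univ, true_and, forall_exists_index,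
      forall_apply_eq_imp_iff]
    exact fun i ↦ Algebra.IsSeparable.isSeparable K (e a i)
  · rw [← EmbeddingLike.map_eq_zero_iff (f := e)]
    funext i
    have hdvd : minpoly K (e a i) ∣ ∏ p ∈ s, p :=
      Finset.dvd_prod_of_mem _ (Finset.mem_image_of_mem _ (Finset.mem_univ i))
    have happ : e (aeval a (∏ p ∈ s, p)) i = aeval (e a i) (∏ p ∈ s, p) :=
      (aeval_algHom_apply ((Pi.evalAlgHom K L i).comp (e : A →ₐ[K] ∀ i, L i)) a _).symm
    rw [happ, Pi.zero_apply]
    exact (minpoly.dvd_iff).1 hdvd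

end Pi

variable {K A : Type*} [Field K] [CommRing A] [Algebra K A]

theorem isReduced_of_traceForm_nondegenerate_s16 (h : (traceForm K A).Nondegenerate) :
    IsReduced A where
  eq_zero x hx := h.1 x fun y ↦ by
    rw [traceForm_apply]
    exact (isNilpotent_trace_of_isNilpotent ((Commute.all x y).isNilpotent_mul_right hx)).eq_zero

theorem formallyUnramified_of_forall_exists_separable
    (h : ∀ a : A, ∃ f : K[X], f.Separable ∧ aeval a f = 0) : FormallyUnramified K A := by
  refine ⟨?_⟩
  rw [← Submodule.subsingleton_iff A, ← subsingleton_iff_bot_eq_top, eq_comm, eq_bot_iff,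
    ← KaehlerDifferential.span_range_derivation, Submodule.span_le]
  rintro _ ⟨a, rfl⟩
  obtain ⟨f, hf, hfa⟩ := h a
  have hD := (KaehlerDifferential.D K A).map_aeval f a
  obtain ⟨u, v, huv⟩ := hf
  have hunit : aeval a v * aeval a (derivative f) = 1 := by
    simpa [hfa] using congrArg (aeval a) huv
  rw [hfa, map_zero] at hD
  rw [SetLike.mem_coe, Submodule.mem_bot, ← one_smul A (KaehlerDifferential.D K A a), ← hunit,
    mul_smul, ← hD, smul_zero]

attribute [local instance] Ideal.Quotient.field in
theorem formallyUnramified_tfae [FiniteDimensional K A] :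
    [FormallyUnramified K A, (traceForm K A).Nondegenerate,
      ∀ a : A, ∃ f : K[X], f.Separable ∧ aeval a f = 0].TFAE := by
  have : IsArtinianRing A := .of_finite K A
  tfae_have 1 → 2 := fun _ ↦ by
    have := FormallyUnramified.isReduced_of_field K A
    rw [traceForm_nondegenerate_iff_of_algEquiv_pi ((IsArtinianRing.equivPi A).restrictScalars K)]
    exact fun m ↦ FormallyUnramified.isSeparable K (A ⧸ m.asIdeal)
  tfae_have 2 → 3 := fun h ↦ by
    have := isReduced_of_traceForm_nondegenerate_s16 h
    let e := (IsArtinianRing.equivPi A).restrictScalars K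
    have := (traceForm_nondegenerate_iff_of_algEquiv_pi e).1 h
    exact exists_separable_aeval_eq_zero_of_algEquiv_pi e
  tfae_have 3 → 1 := formallyUnramified_of_forall_exists_separable
  tfae_finish

end Algebra

/-- A nontrivial finite-dimensional commutative algebra `A` over a field `K` is
formally unramified (`Ω_{A/K} = 0`) iff its trace form is nondegenerate, iff every
element of `A` is a root of some separable polynomial of `K[X]`. -/
theorem stmt16 {K A : Type*} [Field K] [CommRing A] [Nontrivial A] [Algebra K A]
    [FiniteDimensional K A] :
    (Subsingleton (KaehlerDifferential K A) ↔ (Algebra.traceForm K A).Nondegenerate) ∧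
    ((Algebra.traceForm K A).Nondegenerate ↔
      ∀ a : A, ∃ f : Polynomial K, f.Separable ∧ Polynomial.aeval a f = 0) := by
  rw [← Algebra.formallyUnramified_iff]
  have h := Algebra.formallyUnramified_tfae (K := K) (A := A)
  exact ⟨h.out 0 1, h.out 1 2⟩
end
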